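/- Assume n ≥ 2 and d ≥ 5, and set x := 1 + ⌈nd/2⌉. Let T = T_1 ∪ ⋯ ∪ T_s ⊂ P^n, s ≥ 2, be a reducible rational normal curve, and suppose there exists S ∈ T(n,d;x)' with S ⊂ T. Set n_i := deg(T_i) and x_i := #(S ∩ T_i). Then: (1) S ⊂ T_reg (S avoids the singular points of T); (2) n is even and d is odd; (3) every final component T_i of T has n_i odd and 2x_i = n_i·d + 1. -/

import Mathlib

open MvPolynomial

noncomputable section

/-- Projective `n`-space over `k`, as the projectivization of `k^(n+1)`. -/
abbrev ProjSpace (k : Type*) [Field k] (n : ℕ) := Projectivization k (Fin (n+1) → k)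

variable (k : Type*) [Field k]

/-- Evaluation at a vector, as a linear map on polynomials. -/
def evalLM {n : ℕ} (v : Fin n → k) : MvPolynomial (Fin n) k →ₗ[k] k :=
  (MvPolynomial.aeval v).toLinearMap

/-- The submodule of polynomials vanishing together with all first partial derivatives at `v`. -/
def doubleVanishing {n : ℕ} (v : Fin n → k) : Submodule k (MvPolynomial (Fin n) k) :=
  LinearMap.ker (evalLM k v) ⊓
    ⨅ i : Fin n, LinearMap.ker ((evalLM k v).comp (MvPolynomial.pderiv i).toLinearMap)

/-- `h^0(I_{2S}(d))`: dimension of degree-`d` forms vanishing doubly at all points of `S`. -/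
def h0 (n d : ℕ) (S : Finset (ProjSpace k n)) : ℕ :=
  Module.finrank k
    ↥(homogeneousSubmodule (Fin (n+1)) k d ⊓ ⨅ p ∈ S, doubleVanishing k p.rep)

/-- `h^1(I_{2S}(d)) = h^0(I_{2S}(d)) + (n+1)#S - C(n+d,n)`. -/
def h1 (n d : ℕ) (S : Finset (ProjSpace k n)) : ℤ :=
  (h0 k n d S : ℤ) + (n+1) * S.card - (n+d).choose n

/-- `S` spans `P^n`: it is contained in no hyperplane. -/
def Spans (n : ℕ) (S : Finset (ProjSpace k n)) : Prop :=
  Submodule.span k (Projectivization.rep '' (S : Set (ProjSpace k n))) = ⊤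

/-- The Terracini locus `T(n,d;x)`. -/
def Terracini (n d x : ℕ) : Set (Finset (ProjSpace k n)) :=
  {S | S.card = x ∧ Spans k n S ∧ 0 < h0 k n d S ∧ 0 < h1 k n d S}

/-- The minimally Terracini locus `T(n,d;x)'`. -/
def minTerracini (n d x : ℕ) : Set (Finset (ProjSpace k n)) :=
  {S | S ∈ Terracini k n d x ∧ ∀ A : Finset (ProjSpace k n), A ⊂ S → h1 k n d A = 0}

end
/-- The `i`-th coordinate `s^(n-i) t^i` of the standard rational normal curve of degree `n`. -/
def stdRNCvec (k : Type*) [Field k] (n : ℕ) (s t : k) : Fin (n+1) → k :=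
  fun i => s ^ (n - (i : ℕ)) * t ^ (i : ℕ)

/-- The standard rational normal curve in `P^n`: the image of
`[s:t] ↦ [s^n : s^(n-1)t : ⋯ : t^n]`. -/
def stdRNC (k : Type*) [Field k] (n : ℕ) : Set (ProjSpace k n) :=
  {p | ∃ s t : k, (s ≠ 0 ∨ t ≠ 0) ∧
    Projectivization.submodule p = Submodule.span k {stdRNCvec k n s t}}

/-- A rational normal curve in `P^n`: a curve projectively equivalent to the standard one. -/
def IsRNC (k : Type*) [Field k] (n : ℕ) (C : Set (ProjSpace k n)) : Prop :=
  ∃ g : (Fin (n+1) → k) ≃ₗ[k] (Fin (n+1) → k),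
    C = {p | ∃ s t : k, (s ≠ 0 ∨ t ≠ 0) ∧
      Projectivization.submodule p = Submodule.span k {g (stdRNCvec k n s t)}}

/-- Data for a reducible rational normal curve in `P^n`: a union of `s ≥ 2` irreducible
components, the `i`-th being a rational normal curve of degree `deg i` embedded in its
linear span via an injective linear map `emb i`. -/
structure RedRNC (k : Type*) [Field k] (n : ℕ) where
  s : ℕ
  two_le_s : 2 ≤ s
  deg : Fin s → ℕ
  deg_pos : ∀ i, 0 < deg i
  sum_deg : ∑ i, deg i = n
  emb : ∀ i, (Fin (deg i + 1) → k) →ₗ[k] (Fin (n+1) → k)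
  emb_inj : ∀ i, Function.Injective (emb i)

namespace RedRNC

variable {k : Type*} [Field k] {n : ℕ}

/-- The `i`-th irreducible component: a rational normal curve in its linear span. -/
def comp (T : RedRNC k n) (i : Fin T.s) : Set (ProjSpace k n) :=
  Projectivization.map (T.emb i) (T.emb_inj i) '' stdRNC k (T.deg i)

/-- The underlying reduced curve: the union of the components. -/
def curve (T : RedRNC k n) : Set (ProjSpace k n) := ⋃ i, T.comp i

/-- `T` is a genuine reducible rational normal curve: the components are pairwise distinct
(the curve is reduced and reducible of degree `n`), the curve is connected, and it spans
`P^n`. -/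
def IsGood (T : RedRNC k n) : Prop :=
  (∀ i j, i ≠ j → T.comp i ≠ T.comp j) ∧
  (∀ I : Finset (Fin T.s), I.Nonempty → I ≠ Finset.univ →
    ∃ i ∈ I, ∃ j ∉ I, (T.comp i ∩ T.comp j).Nonempty) ∧
  Submodule.span k (Projectivization.rep '' T.curve) = ⊤

/-- The singular locus of the curve: the points lying on at least two components. -/
def sing (T : RedRNC k n) : Set (ProjSpace k n) :=
  {p | ∃ i j, i ≠ j ∧ p ∈ T.comp i ∧ p ∈ T.comp j}

/-- The smooth locus of the curve. -/
def reg (T : RedRNC k n) : Set (ProjSpace k n) := T.curve \ T.sing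

/-- A final component: an irreducible component containing exactly one singular point. -/
def Final (T : RedRNC k n) (i : Fin T.s) : Prop :=
  (T.comp i ∩ T.sing).ncard = 1

end RedRNC

section Helpers

variable {k : Type*} [Field k]

/-- The Veronese vector along the affine line `q + z r`, as polynomials in `z`. -/
noncomputable def lineVec (m : ℕ) (q r : k × k) : Fin (m+1) → Polynomial k :=
  fun i => (Polynomial.C q.1 + Polynomial.C r.1 * Polynomial.X) ^ (m - (i : ℕ)) *
    (Polynomial.C q.2 + Polynomial.C r.2 * Polynomial.X) ^ (i : ℕ)

/-- The embedded version of `lineVec`. -/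
noncomputable def linePoly {n m : ℕ} (e : (Fin (m+1) → k) →ₗ[k] (Fin (n+1) → k))
    (q r : k × k) : Fin (n+1) → Polynomial k :=
  fun l => ∑ j, Polynomial.C (e (Pi.single j 1) l) * lineVec m q r j

lemma emb_apply_sum {n m : ℕ} (e : (Fin (m+1) → k) →ₗ[k] (Fin (n+1) → k))
    (v : Fin (m+1) → k) (l : Fin (n+1)) :
    e v l = ∑ j, e (Pi.single j 1) l * v j := by
  rw [LinearMap.pi_apply_eq_sum_univ e v, Finset.sum_apply]
  refine Finset.sum_congr rfl fun j _ => ?_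
  have : (fun j' => if j = j' then (1:k) else 0) = Pi.single j 1 := by
    ext j'
    simp [Pi.single_apply, eq_comm]
  simp [this, mul_comm]

lemma eval_linePoly {n m : ℕ} (e : (Fin (m+1) → k) →ₗ[k] (Fin (n+1) → k))
    (q r : k × k) (z : k) (l : Fin (n+1)) :
    (linePoly e q r l).eval z = e (stdRNCvec k m (q.1 + r.1 * z) (q.2 + r.2 * z)) l := by
  rw [emb_apply_sum]
  simp [linePoly, lineVec, stdRNCvec, Polynomial.eval_finsetSum]

lemma natDegree_linePoly {n m : ℕ} (e : (Fin (m+1) → k) →ₗ[k] (Fin (n+1) → k))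
    (q r : k × k) (l : Fin (n+1)) : (linePoly e q r l).natDegree ≤ m := by
  unfold linePoly
  refine Polynomial.natDegree_sum_le_of_forall_le _ _ fun j _ => ?_
  refine (Polynomial.natDegree_C_mul_le _ _).trans ?_
  unfold lineVec
  have hlin : ∀ a b : k, (Polynomial.C a + Polynomial.C b * Polynomial.X).natDegree ≤ 1 := by
    intro a b
    rw [add_comm]
    exact Polynomial.natDegree_linear_le
  refine Polynomial.natDegree_mul_le.trans ?_
  have h1 := Polynomial.natDegree_pow_le_of_le (m - (j:ℕ)) (hlin q.1 r.1)
  have h2 := Polynomial.natDegree_pow_le_of_le (j:ℕ) (hlin q.2 r.2)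
  have := j.2
  omega

lemma eval_aeval_poly {N : ℕ} (G : Fin N → Polynomial k) (F : MvPolynomial (Fin N) k) (z : k) :
    (MvPolynomial.aeval G F).eval z = MvPolynomial.eval (fun l => (G l).eval z) F := by
  rw [← Polynomial.coe_evalRingHom, MvPolynomial.aeval_def, MvPolynomial.eval₂_eq',
    MvPolynomial.eval_eq']
  simp [Polynomial.eval_prod]

lemma eval_pull {n m : ℕ} (e : (Fin (m+1) → k) →ₗ[k] (Fin (n+1) → k))
    (q r : k × k) (z : k) (F : MvPolynomial (Fin (n+1)) k) :
    (MvPolynomial.aeval (linePoly e q r) F).eval z =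
      MvPolynomial.eval (e (stdRNCvec k m (q.1 + r.1 * z) (q.2 + r.2 * z))) F := by
  rw [eval_aeval_poly]
  congr 1
  simp only [eval_linePoly]

lemma stdRNCvec_smul (m : ℕ) (c s t : k) :
    stdRNCvec k m (c * s) (c * t) = c ^ m • stdRNCvec k m s t := by
  ext i
  simp only [stdRNCvec, Pi.smul_apply, smul_eq_mul, mul_pow]
  have : c ^ m = c ^ (m - (i:ℕ)) * c ^ (i:ℕ) := by
    rw [← pow_add]; congr 1; have := i.2; omega
  rw [this]; ring

lemma eval_smul_homog {N d : ℕ} {F : MvPolynomial (Fin N) k} (hF : F.IsHomogeneous d) (c : k)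
    (v : Fin N → k) : MvPolynomial.eval (c • v) F = c ^ d * MvPolynomial.eval v F := by
  rw [MvPolynomial.eval_eq', MvPolynomial.eval_eq', Finset.mul_sum]
  refine Finset.sum_congr rfl fun x hx => ?_
  have hx' := hF (MvPolynomial.mem_support_iff.1 hx)
  have hdeg : ∑ i, x i = d := by
    rw [← hx', Finsupp.weight_apply, Finsupp.sum_fintype] <;> simp
  simp only [Pi.smul_apply, smul_eq_mul, mul_pow, Finset.prod_mul_distrib]
  rw [Finset.prod_pow_eq_pow_sum, hdeg]; ring

/-- A form vanishing at `m d + 1` points of the line through `q` (one of them `q`) vanishes on the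
whole component. -/
lemma vanish_of_points [CharZero k] {n m d : ℕ} (e : (Fin (m+1) → k) →ₗ[k] (Fin (n+1) → k))
    (q r : k × k) (hqr : ∀ s t : k, ∃ a b : k, s = a * q.1 + b * r.1 ∧ t = a * q.2 + b * r.2)
    {F : MvPolynomial (Fin (n+1)) k} (hF : F.IsHomogeneous d)
    (h : ∀ z ∈ Finset.range (d * m + 1), MvPolynomial.eval
      (e (stdRNCvec k m (q.1 + r.1 * (z:k)) (q.2 + r.2 * (z:k)))) F = 0) (s t : k) :
    MvPolynomial.eval (e (stdRNCvec k m s t)) F = 0 := by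
  have hz : MvPolynomial.aeval (linePoly e q r) F = 0 := by
    have hinj : Function.Injective (fun z : ℕ => (z:k)) := Nat.cast_injective
    refine Polynomial.eq_zero_of_natDegree_lt_card_of_eval_eq_zero'
      (p := MvPolynomial.aeval (linePoly e q r) F)
      ((Finset.range (d * m + 1)).map ⟨_, hinj⟩) ?_ ?_
    · intro i hi
      obtain ⟨z, hz, rfl⟩ := Finset.mem_map.1 hi
      rw [eval_pull]
      exact h z hz
    · rw [Finset.card_map, Finset.card_range]
      have := MvPolynomial.aeval_natDegree_le F hF.totalDegree_le (linePoly e q r)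
        (natDegree_linePoly e q r)
      omega
  have hall : ∀ a b : k, a ≠ 0 → MvPolynomial.eval
      (e (stdRNCvec k m (b * r.1 + q.1 * a) (b * r.2 + q.2 * a))) F = 0 := by
    intro a b ha
    have h1 : b * r.1 + q.1 * a = a * (q.1 + r.1 * (b / a)) := by field_simp; ring
    have h2 : b * r.2 + q.2 * a = a * (q.2 + r.2 * (b / a)) := by field_simp; ring
    rw [h1, h2, stdRNCvec_smul, map_smul, eval_smul_homog hF, ← eval_pull, hz]
    simp
  obtain ⟨a, b, rfl, rfl⟩ := hqr s t
  have hz2 : MvPolynomial.aeval (linePoly e (b * r.1, b * r.2) q) F = 0 := by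
    apply Polynomial.eq_zero_of_infinite_isRoot
    refine Set.Infinite.mono (s := {0}ᶜ) ?_ (Set.finite_singleton (0:k)).infinite_compl
    intro z hz
    rw [Set.mem_ofPred_eq, Polynomial.IsRoot, eval_pull]
    exact hall z b hz
  have := eval_pull e (b * r.1, b * r.2) q a F
  rw [hz2] at this
  simp only [Polynomial.eval_zero] at this
  rw [this]
  congr 4 <;> ring

lemma exists_compl_dir (q : k × k) (hq : q.1 ≠ 0 ∨ q.2 ≠ 0) :
    ∃ r : k × k, ∀ s t : k, ∃ a b : k, s = a * q.1 + b * r.1 ∧ t = a * q.2 + b * r.2 := by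
  by_cases h : q.1 = 0
  · have h2 : q.2 ≠ 0 := by tauto
    refine ⟨(1, 0), fun s t => ⟨t / q.2, s, ?_, ?_⟩⟩
    · simp [h]
    · field_simp; simp
  · refine ⟨(0, 1), fun s t => ⟨s / q.1, t - s / q.1 * q.2, ?_, ?_⟩⟩
    · field_simp; simp
    · ring

lemma derivative_aeval_poly {N : ℕ} (G : Fin N → Polynomial k) (F : MvPolynomial (Fin N) k) :
    Polynomial.derivative (MvPolynomial.aeval G F) =
      ∑ l, MvPolynomial.aeval G (MvPolynomial.pderiv l F) * Polynomial.derivative (G l) := by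
  induction F using MvPolynomial.induction_on with
  | C a => simp
  | add p q hp hq => simp [hp, hq, add_mul, Finset.sum_add_distrib]
  | mul_X p i hp =>
    have hl : ∀ l, MvPolynomial.aeval G (MvPolynomial.pderiv l (p * MvPolynomial.X i)) *
        Polynomial.derivative (G l) =
        MvPolynomial.aeval G (MvPolynomial.pderiv l p) * Polynomial.derivative (G l) * G i +
        MvPolynomial.aeval G p * (if l = i then Polynomial.derivative (G i) else 0) := by
      intro l
      rw [MvPolynomial.pderiv_mul, map_add, map_mul, map_mul, MvPolynomial.aeval_X]
      by_cases hli : l = i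
      · subst hli
        rw [MvPolynomial.pderiv_X_self, if_pos rfl, map_one]
        ring
      · rw [MvPolynomial.pderiv_X_of_ne (Ne.symm hli), if_neg hli, map_zero]
        ring
    rw [Finset.sum_congr rfl fun l _ => hl l, Finset.sum_add_distrib, ← Finset.sum_mul, ← hp,
      ← Finset.mul_sum, Finset.sum_ite_eq' Finset.univ i, if_pos (Finset.mem_univ i), map_mul,
      MvPolynomial.aeval_X, Polynomial.derivative_mul]

end Helpers

section Helpers2

variable {k : Type*} [Field k]

lemma finrank_homog (n d : ℕ) :
    Module.finrank k (homogeneousSubmodule (Fin (n+1)) k d) = (n+d).choose n := by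
  rw [homogeneousSubmodule_eq_finsupp_supported]
  have hset : {x : Fin (n+1) →₀ ℕ | x.degree = d} =
      ((Finset.univ : Finset (Fin (n+1))).finsuppAntidiag d : Set (Fin (n+1) →₀ ℕ)) := by
    ext x
    simp [Finsupp.degree_eq_sum, Finset.mem_finsuppAntidiag]
  rw [hset]
  refine (LinearEquiv.finrank_eq (AddMonoidAlgebra.supportedEquivFinsupp _)).trans ?_
  rw [Module.finrank_finsupp_self]
  simp only [Fintype.card_coe, Finset.coe_sort_coe]
  rw [Finset.card_finsuppAntidiag_nat_eq_choose]
  simp only [Finset.card_univ, Fintype.card_fin]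
  rw [show n + 1 + d - 1 = n + d by omega]
  exact (Nat.choose_symm_add).symm

instance finite_homog (n d : ℕ) : Module.Finite k (homogeneousSubmodule (Fin (n+1)) k d) := by
  apply Module.finite_of_finrank_pos
  rw [finrank_homog]
  exact Nat.choose_pos (by omega)

lemma evalLM_apply {N : ℕ} (v : Fin N → k) (F : MvPolynomial (Fin N) k) :
    evalLM k v F = MvPolynomial.eval v F := by
  simp [evalLM, MvPolynomial.aeval_eq_eval]

/-- Gradients at the points of `A`. -/
noncomputable def gradMap (n d : ℕ) (A : Finset (ProjSpace k n)) :
    homogeneousSubmodule (Fin (n+1)) k d →ₗ[k] (A → Fin (n+1) → k) :=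
  LinearMap.pi fun a => LinearMap.pi fun l =>
    ((evalLM k a.1.rep).comp (MvPolynomial.pderiv l).toLinearMap).comp (Submodule.subtype _)

lemma gradMap_apply (n d : ℕ) (A : Finset (ProjSpace k n))
    (F : homogeneousSubmodule (Fin (n+1)) k d) (a : A) (l : Fin (n+1)) :
    gradMap n d A F a l = MvPolynomial.eval a.1.rep (MvPolynomial.pderiv l F.1) := by
  simp [gradMap, evalLM_apply]

lemma euler_eval {N d : ℕ} {F : MvPolynomial (Fin N) k} (hF : F.IsHomogeneous d)
    (v : Fin N → k) :
    ∑ l, MvPolynomial.eval v (MvPolynomial.pderiv l F) * v l = d * MvPolynomial.eval v F := by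
  have := congrArg (MvPolynomial.eval v) hF.sum_X_mul_pderiv
  simp only [map_sum, map_mul, MvPolynomial.eval_X, nsmul_eq_mul, map_natCast] at this
  rw [← this]
  exact Finset.sum_congr rfl fun l _ => mul_comm _ _

lemma h0_eq [CharZero k] (n d : ℕ) (hd : 0 < d) (A : Finset (ProjSpace k n)) :
    h0 k n d A = Module.finrank k (LinearMap.ker (gradMap n d A)) := by
  unfold h0
  rw [← Submodule.map_comap_subtype, Submodule.finrank_map_subtype_eq]
  have : Submodule.comap (homogeneousSubmodule (Fin (n+1)) k d).subtype
      (⨅ p ∈ A, doubleVanishing k p.rep) = LinearMap.ker (gradMap n d A) := by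
    ext F
    simp only [Submodule.mem_comap, Submodule.mem_iInf, doubleVanishing, Submodule.mem_inf,
      LinearMap.mem_ker, LinearMap.comp_apply, evalLM_apply, Submodule.subtype_apply]
    constructor
    · intro h
      ext a l
      rw [gradMap_apply]
      exact (h a.1 a.2).2 l
    · intro h p hp
      have hg : ∀ l, MvPolynomial.eval p.rep (MvPolynomial.pderiv l F.1) = 0 := by
        intro l
        rw [← gradMap_apply n d A F ⟨p, hp⟩ l, h]
        rfl
      refine ⟨?_, hg⟩
      have he := euler_eval (d := d) F.2 p.rep
      simp only [hg, zero_mul, Finset.sum_const_zero] at he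
      have hd' : (d:k) ≠ 0 := by exact_mod_cast hd.ne'
      exact (mul_eq_zero.1 he.symm).resolve_left hd'
  rw [this]

lemma gradMap_surjective [CharZero k] (n d : ℕ) (hd : 0 < d) (A : Finset (ProjSpace k n))
    (h : h1 k n d A = 0) : Function.Surjective (gradMap n d A) := by
  rw [← LinearMap.range_eq_top]
  apply Submodule.eq_top_of_finrank_eq
  have h2 := LinearMap.finrank_range_add_finrank_ker (gradMap n d A)
  rw [finrank_homog, ← h0_eq n d hd] at h2
  unfold h1 at h
  rw [Module.finrank_pi_fintype]
  simp only [Module.finrank_fintype_fun_eq_card, Fintype.card_fin, Finset.sum_const,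
    Finset.card_univ, Fintype.card_coe, smul_eq_mul]
  zify at h2 ⊢
  linarith

/-- If the double points of `A` impose independent conditions, and vanishing on `P` forces vanishing
to first order along a tangent direction at each point of `A`, then `2 #A ≤ #P`. -/
lemma two_card_le [CharZero k] (n d : ℕ) (hd : 0 < d) (A : Finset (ProjSpace k n))
    (h : h1 k n d A = 0) (P : Finset (Fin (n+1) → k))
    (hA : ∀ a ∈ A, ∃ w : Fin (n+1) → k,
      (∀ α β : k, ∃ c : Fin (n+1) → k, ∑ l, c l * a.rep l = α ∧ ∑ l, c l * w l = β) ∧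
      ∀ F : MvPolynomial (Fin (n+1)) k, F.IsHomogeneous d →
        (∀ v ∈ P, MvPolynomial.eval v F = 0) → MvPolynomial.eval a.rep F = 0 ∧
        ∑ l, MvPolynomial.eval a.rep (MvPolynomial.pderiv l F) * w l = 0) :
    2 * A.card ≤ P.card := by
  choose! w hw1 hw2 using hA
  let pr : Fin (n+1) → (Fin (n+1) → k) →ₗ[k] k := fun l => LinearMap.proj l
  let pa : A → (A → Fin (n+1) → k) →ₗ[k] (Fin (n+1) → k) := fun a => LinearMap.proj a
  let Q : (A → Fin (n+1) → k) →ₗ[k] (A → k × k) :=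
    LinearMap.pi fun a => LinearMap.prod
      (∑ l, (a.1.rep l) • (pr l).comp (pa a))
      (∑ l, (w a.1 l) • (pr l).comp (pa a))
  have hQ : ∀ c a, Q c a = (∑ l, c a l * a.1.rep l, ∑ l, c a l * w a.1 l) := by
    intro c a
    simp [Q, pr, pa, mul_comm]
  let Ψ := Q.comp (gradMap n d A)
  let E : homogeneousSubmodule (Fin (n+1)) k d →ₗ[k] (P → k) :=
    LinearMap.pi fun v => (evalLM k v.1).comp (Submodule.subtype _)
  have hQs : Function.Surjective Q := by
    intro y
    choose c hc1 hc2 using fun a : A => hw1 a.1 a.2 (y a).1 (y a).2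
    refine ⟨c, ?_⟩
    funext a
    rw [hQ, hc1, hc2]
  have hΨs : Function.Surjective Ψ := hQs.comp (gradMap_surjective n d hd A h)
  have hker : LinearMap.ker E ≤ LinearMap.ker Ψ := by
    intro F hF
    rw [LinearMap.mem_ker] at hF ⊢
    have hv : ∀ v ∈ P, MvPolynomial.eval v F.1 = 0 := by
      intro v hv
      have := congrFun hF ⟨v, hv⟩
      simpa [E, evalLM_apply] using this
    funext a
    obtain ⟨e1, e2⟩ := hw2 a.1 a.2 F.1 F.2 hv
    change Q (gradMap n d A F) a = 0
    rw [hQ]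
    simp only [gradMap_apply]
    rw [e2, euler_eval (d := d) F.2, e1]
    simp
  have r1 := LinearMap.finrank_range_add_finrank_ker Ψ
  have r2 := LinearMap.finrank_range_add_finrank_ker E
  have r3 := Submodule.finrank_mono hker
  have r4 : Module.finrank k (LinearMap.range E) ≤ P.card := by
    refine (Submodule.finrank_le _).trans ?_
    simp
  rw [LinearMap.range_eq_top.2 hΨs, finrank_top, Module.finrank_pi_fintype] at r1
  simp at r1
  omega

/-- The tangent direction to a rational normal curve. -/
lemma exists_tangent [CharZero k] {n m : ℕ} (hm : 0 < m)
    (e : (Fin (m+1) → k) →ₗ[k] (Fin (n+1) → k)) (he : Function.Injective e) (s t : k)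
    (hst : s ≠ 0 ∨ t ≠ 0) : ∃ w : Fin (n+1) → k,
      (∀ α β : k, ∃ c : Fin (n+1) → k,
        ∑ l, c l * e (stdRNCvec k m s t) l = α ∧ ∑ l, c l * w l = β) ∧
      ∀ F : MvPolynomial (Fin (n+1)) k,
        (∀ s t, MvPolynomial.eval (e (stdRNCvec k m s t)) F = 0) →
        ∑ l, MvPolynomial.eval (e (stdRNCvec k m s t)) (MvPolynomial.pderiv l F) * w l = 0 := by
  have key : ∃ r : k × k, ∀ α β : k, (∀ j, α * stdRNCvec k m s t j +
      β * (Polynomial.derivative (lineVec m (s, t) r j)).eval 0 = 0) → α = 0 ∧ β = 0 := by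
    by_cases hs : s = 0
    · have ht : t ≠ 0 := by tauto
      subst hs
      refine ⟨(1, 0), fun α β h => ?_⟩
      have h1 := h ⟨m, by omega⟩
      have h2 := h ⟨m - 1, by omega⟩
      simp [stdRNCvec, lineVec, ht, ← Polynomial.C_pow, -map_pow] at h1
      simp [lineVec, ht, h1, ← Polynomial.C_pow, -map_pow, show m - (m - 1) = 1 by omega] at h2
      exact ⟨h1, h2⟩
    · refine ⟨(0, 1), fun α β h => ?_⟩
      have h1 := h ⟨0, by omega⟩
      have h2 := h ⟨1, by omega⟩
      simp [stdRNCvec, lineVec, hs, ← Polynomial.C_pow, -map_pow] at h1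
      simp [lineVec, hs, h1, ← Polynomial.C_pow, -map_pow] at h2
      exact ⟨h1, h2⟩
  obtain ⟨r, hr⟩ := key
  set w0 : Fin (m+1) → k := fun j => (Polynomial.derivative (lineVec m (s, t) r j)).eval 0 with hw0
  refine ⟨e w0, ?_, ?_⟩
  · let f : (k × k) →ₗ[k] (Fin (n+1) → k) := e.comp
      ((LinearMap.toSpanSingleton k _ (stdRNCvec k m s t)).coprod (LinearMap.toSpanSingleton k _ w0))
    have hf : ∀ x, f x = e (x.1 • stdRNCvec k m s t + x.2 • w0) := by
      intro x; simp [f]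
    have hfi : LinearMap.ker f = ⊥ := by
      rw [LinearMap.ker_eq_bot']
      intro x hx
      rw [hf] at hx
      have h0 := he (hx.trans (map_zero e).symm)
      have := hr x.1 x.2 (fun j => by simpa using congrFun h0 j)
      exact Prod.ext this.1 this.2
    obtain ⟨g, hg⟩ := LinearMap.exists_leftInverse_of_injective f hfi
    intro α β
    let φ : (Fin (n+1) → k) →ₗ[k] k := (α • LinearMap.fst k k k + β • LinearMap.snd k k k).comp g
    have hφ : ∀ v, ∑ l, φ (Pi.single l 1) * v l = φ v := by
      intro v
      conv_rhs => rw [LinearMap.pi_apply_eq_sum_univ φ v]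
      refine Finset.sum_congr rfl fun j _ => ?_
      have : (fun j' => if j = j' then (1:k) else 0) = Pi.single j 1 := by
        ext j'
        simp [Pi.single_apply, eq_comm]
      simp [this, mul_comm]
    have hgf : ∀ x, g (f x) = x := fun x => LinearMap.congr_fun hg x
    refine ⟨fun l => φ (Pi.single l 1), ?_, ?_⟩
    · rw [hφ]
      have := hgf (1, 0)
      rw [hf] at this
      simp at this
      simp [φ, this]
    · rw [hφ]
      have := hgf (0, 1)
      rw [hf] at this
      simp at this
      simp [φ, this]
  · intro F hF
    have hz : MvPolynomial.aeval (linePoly e (s, t) r) F = 0 := by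
      apply Polynomial.funext
      intro z
      rw [eval_pull, hF]
      simp
    have hder := derivative_aeval_poly (linePoly e (s, t) r) F
    rw [hz] at hder
    have h0 := congrArg (Polynomial.eval 0) hder
    rw [Polynomial.eval_finsetSum] at h0
    simp only [Polynomial.derivative_zero, Polynomial.eval_zero, Polynomial.eval_mul,
      eval_pull, mul_zero, add_zero] at h0
    rw [h0]
    refine Finset.sum_congr rfl fun l _ => ?_
    congr 1
    rw [emb_apply_sum]
    simp [linePoly, Polynomial.eval_finsetSum, hw0]

end Helpers2

section Helpers3

/-- Connectedness of a subset of a finite graph given by a relation. -/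
def ConnSet {ι : Type*} (adj : ι → ι → Prop) (I : Finset ι) : Prop :=
  I.Nonempty ∧ ∀ I' ⊆ I, I'.Nonempty → I' ≠ I → ∃ i ∈ I', ∃ j ∈ I, j ∉ I' ∧ adj i j

lemma connSet_singleton {ι : Type*} (adj : ι → ι → Prop) (i : ι) : ConnSet adj {i} := by
  refine ⟨Finset.singleton_nonempty i, fun I' h1 h2 h3 => ?_⟩
  rcases Finset.subset_singleton_iff.1 h1 with h | h
  · simp [h] at h2
  · exact absurd h h3

lemma connSet_insert {ι : Type*} [DecidableEq ι] {adj : ι → ι → Prop}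
    (hsymm : ∀ i j, adj i j → adj j i) {I : Finset ι} (hI : ConnSet adj I) {a b : ι}
    (ha : a ∈ I) (hab : adj a b) : ConnSet adj (insert b I) := by
  by_cases hbI : b ∈ I
  · rwa [Finset.insert_eq_of_mem hbI]
  refine ⟨Finset.insert_nonempty _ _, fun I' h1 h2 h3 => ?_⟩
  by_cases hIn : (I' ∩ I).Nonempty
  · by_cases hEq : I' ∩ I = I
    · have hsub : I ⊆ I' := by rw [← hEq]; exact Finset.inter_subset_left
      have hb : b ∉ I' := by
        intro hb
        exact h3 (Finset.Subset.antisymm h1 (Finset.insert_subset hb hsub))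
      exact ⟨a, hsub ha, b, Finset.mem_insert_self _ _, hb, hab⟩
    · obtain ⟨i, hi, j, hj, hj', hij⟩ := hI.2 _ Finset.inter_subset_right hIn hEq
      refine ⟨i, (Finset.mem_inter.1 hi).1, j, Finset.mem_insert_of_mem hj, ?_, hij⟩
      intro hj2
      exact hj' (Finset.mem_inter.2 ⟨hj2, hj⟩)
  · have hall : ∀ x ∈ I', x = b := by
      intro x hx
      rcases Finset.mem_insert.1 (h1 hx) with h | h
      · exact h
      · exact absurd ⟨x, Finset.mem_inter.2 ⟨hx, h⟩⟩ hIn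
    obtain ⟨x, hx⟩ := h2
    have hb : b ∈ I' := by rw [← hall x hx]; exact hx
    refine ⟨b, hb, a, Finset.mem_insert_of_mem ha, ?_, hsymm _ _ hab⟩
    intro haI
    exact hbI (hall a haI ▸ ha)

lemma exists_conn_split {ι : Type*} [Fintype ι] [DecidableEq ι] {adj : ι → ι → Prop}
    (hsymm : ∀ i j, adj i j → adj j i) (hU : ConnSet adj Finset.univ) {i j : ι} (hij : i ≠ j) :
    ∃ J : Finset ι, j ∈ J ∧ i ∉ J ∧ ConnSet adj J ∧ ConnSet adj Jᶜ := by
  classical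
  obtain ⟨J, hJ, hmax⟩ := Finset.exists_max_image
    ((Finset.univ : Finset (Finset ι)).filter fun J => j ∈ J ∧ i ∉ J ∧ ConnSet adj J)
    Finset.card ⟨{j}, by simp [hij, connSet_singleton]⟩
  simp only [Finset.mem_filter, Finset.mem_univ, true_and] at hJ hmax
  obtain ⟨hj, hi, hC⟩ := hJ
  refine ⟨J, hj, hi, hC, ⟨i, by simpa using hi⟩, fun I' h1 h2 h3 => ?_⟩
  by_contra hno
  push Not at hno
  have hno' : ∀ a ∈ I', ∀ b, b ∉ J → b ∉ I' → ¬ adj a b := fun a ha b hb hb' =>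
    hno a ha b (by simpa using hb) hb'
  have hJI : ∀ a ∈ I', a ∉ J := fun a ha => by simpa using h1 ha
  -- a part `B` of the complement of `J`, closed under adjacency in that complement
  have hB : ∀ B : Finset ι, B.Nonempty → (∀ b ∈ B, b ∉ J) → i ∉ B →
      (∀ a ∈ B, ∀ b, b ∉ J → b ∉ B → ¬ adj a b) → False := by
    intro B hBn hBJ hiB hcl
    obtain ⟨b, hb, c, -, hc, hbc⟩ := hU.2 B (Finset.subset_univ _) hBn
      (fun h => hiB (h ▸ Finset.mem_univ i))
    have hcJ : c ∈ J := by
      by_contra hcJ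
      exact hcl b hb c hcJ hc hbc
    have hnew := connSet_insert hsymm hC hcJ (hsymm _ _ hbc)
    have hbJ := hBJ b hb
    have := hmax (insert b J) ⟨Finset.mem_insert_of_mem hj, by
      rw [Finset.mem_insert, not_or]
      exact ⟨fun h => hiB (h ▸ hb), hi⟩, hnew⟩
    rw [Finset.card_insert_of_notMem hbJ] at this
    omega
  by_cases hiI : i ∈ I'
  · refine hB (Jᶜ \ I') ?_ ?_ ?_ ?_
    · rw [Finset.sdiff_nonempty]
      intro h
      exact h3 (Finset.Subset.antisymm h1 h)
    · intro b hb
      simpa using (Finset.mem_sdiff.1 hb).1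
    · simp [hiI]
    · intro a ha b hb hb' hab
      have hbI : b ∈ I' := by
        by_contra hbI
        exact hb' (Finset.mem_sdiff.2 ⟨by simpa using hb, hbI⟩)
      have ha' := Finset.mem_sdiff.1 ha
      exact hno' b hbI a (by simpa using ha'.1) ha'.2 (hsymm _ _ hab)
  · exact hB I' h2 hJI hiI hno'

variable {k : Type*} [Field k] {n : ℕ}

/-- Adjacency of components. -/
def compAdj (T : RedRNC k n) (i j : Fin T.s) : Prop := (T.comp i ∩ T.comp j).Nonempty

lemma compAdj_symm (T : RedRNC k n) (i j : Fin T.s) (h : compAdj T i j) : compAdj T j i := by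
  unfold compAdj at *
  rwa [Set.inter_comm]

lemma connSet_univ (T : RedRNC k n) (hT : T.IsGood) : ConnSet (compAdj T) Finset.univ := by
  have := T.two_le_s
  refine ⟨⟨⟨0, by omega⟩, Finset.mem_univ _⟩, fun I' _ h2 h3 => ?_⟩
  obtain ⟨i, hi, j, hj, hij⟩ := hT.2.1 I' h2 h3
  exact ⟨i, hi, j, Finset.mem_univ _, hj, hij⟩

lemma connSet_final (T : RedRNC k n) (hT : T.IsGood) (i : Fin T.s) (hi : T.Final i) :
    ConnSet (compAdj T) ({i} : Finset (Fin T.s))ᶜ := by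
  classical
  have h2s := T.two_le_s
  have hU := connSet_univ T hT
  obtain ⟨p, hp⟩ := Set.ncard_eq_one.1 hi
  have hpt : ∀ b, b ≠ i → compAdj T b i → p ∈ T.comp b := by
    rintro b hb ⟨q, hq1, hq2⟩
    have : q ∈ T.comp i ∩ T.sing := ⟨hq2, b, i, hb, hq1, hq2⟩
    rw [hp, Set.mem_singleton_iff] at this
    rwa [← this]
  refine ⟨?_, fun I' h1 h2 h3 => ?_⟩
  · rw [← Finset.card_pos, Finset.card_compl]
    simp
    omega
  by_contra hno
  push Not at hno
  have hiI : i ∉ I' := fun h => by simpa using h1 h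
  obtain ⟨b, hb, c, -, hc, hbc⟩ := hU.2 I' (Finset.subset_univ _) h2
    (fun h => hiI (h ▸ Finset.mem_univ i))
  have hci : c = i := by
    by_contra hci
    exact hno b hb c (by simpa using hci) hc hbc
  subst hci
  have hLn : (({c} : Finset (Fin T.s))ᶜ \ I').Nonempty := by
    rw [Finset.sdiff_nonempty]
    intro h
    exact h3 (Finset.Subset.antisymm h1 h)
  obtain ⟨b', hb', c', -, hc', hbc'⟩ := hU.2 (({c} : Finset (Fin T.s))ᶜ \ I')
    (Finset.subset_univ _) hLn (fun h => by
      have := h ▸ Finset.mem_univ c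
      simp at this)
  have hb2 := Finset.mem_sdiff.1 hb'
  have hb3 : b' ≠ c := by simpa using hb2.1
  have hcc : c' = c := by
    by_contra hcc
    have hcI : c' ∈ I' := by
      by_contra hcI
      exact hc' (Finset.mem_sdiff.2 ⟨by simpa using hcc, hcI⟩)
    exact hno c' hcI b' hb2.1 hb2.2 (compAdj_symm _ _ _ hbc')
  subst hcc
  have hbne : b ≠ c' := fun h => hiI (h ▸ hb)
  exact hno b hb b' hb2.1 hb2.2 ⟨p, hpt b hbne hbc, hpt b' hb3 hbc'⟩

lemma rep_of_mem_comp [IsAlgClosed k] (T : RedRNC k n) (i : Fin T.s) (p : ProjSpace k n)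
    (hp : p ∈ T.comp i) : ∃ s t : k, (s ≠ 0 ∨ t ≠ 0) ∧
      p.rep = T.emb i (stdRNCvec k (T.deg i) s t) := by
  obtain ⟨x, ⟨s, t, hst, hx⟩, rfl⟩ := hp
  have hv : stdRNCvec k (T.deg i) s t ≠ 0 := by
    intro h
    rw [h, Submodule.span_zero_singleton] at hx
    have h1 := x.finrank_submodule
    rw [hx] at h1
    simp at h1
  have hx' : x = Projectivization.mk k _ hv := by
    apply Projectivization.submodule_injective
    rw [hx, Projectivization.submodule_mk]
  subst hx'
  rw [Projectivization.map_mk]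
  obtain ⟨a, ha⟩ := Projectivization.exists_smul_eq_mk_rep k (T.emb i (stdRNCvec k (T.deg i) s t))
    ((map_ne_zero_iff _ (T.emb_inj i)).2 hv)
  obtain ⟨c, hc⟩ := IsAlgClosed.exists_pow_nat_eq (a : k) (T.deg_pos i)
  have hc0 : c ≠ 0 := by
    rintro rfl
    rw [zero_pow (T.deg_pos i).ne'] at hc
    exact a.ne_zero hc.symm
  refine ⟨c * s, c * t, ?_, ?_⟩
  · simpa [hc0] using hst
  · rw [stdRNCvec_smul, map_smul, hc, ← ha]
    rfl

/-- On a connected subcurve of degree `m`, forms of degree `d` are determined by `m d + 1` points. -/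
lemma exists_points [IsAlgClosed k] [CharZero k] (T : RedRNC k n) (d : ℕ) (I : Finset (Fin T.s))
    (hI : ConnSet (compAdj T) I) : ∃ P : Finset (Fin (n+1) → k),
      P.card ≤ d * (∑ i ∈ I, T.deg i) + 1 ∧
      ∀ F : MvPolynomial (Fin (n+1)) k, F.IsHomogeneous d →
        (∀ v ∈ P, MvPolynomial.eval v F = 0) →
        ∀ i ∈ I, ∀ s t, MvPolynomial.eval (T.emb i (stdRNCvec k (T.deg i) s t)) F = 0 := by
  classical
  let good : Finset (Fin T.s) → Prop := fun I => ∃ P : Finset (Fin (n+1) → k),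
      P.card ≤ d * (∑ i ∈ I, T.deg i) + 1 ∧
      ∀ F : MvPolynomial (Fin (n+1)) k, F.IsHomogeneous d →
        (∀ v ∈ P, MvPolynomial.eval v F = 0) →
        ∀ i ∈ I, ∀ s t, MvPolynomial.eval (T.emb i (stdRNCvec k (T.deg i) s t)) F = 0
  let pt : Fin T.s → k × k → k × k → ℕ → (Fin (n+1) → k) := fun i q r z =>
    T.emb i (stdRNCvec k (T.deg i) (q.1 + r.1 * (z:k)) (q.2 + r.2 * (z:k)))
  change good I
  obtain ⟨i₀, hi₀⟩ := hI.1
  have hbase : good {i₀} := by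
    obtain ⟨r, hr⟩ := exists_compl_dir ((1, 0) : k × k) (by simp)
    refine ⟨(Finset.range (d * T.deg i₀ + 1)).image (pt i₀ (1, 0) r), ?_, ?_⟩
    · refine Finset.card_image_le.trans ?_
      simp
    · intro F hF hP i hi s t
      rw [Finset.mem_singleton] at hi
      subst hi
      exact vanish_of_points (T.emb i) (1, 0) r hr hF
        (fun z hz => hP _ (Finset.mem_image_of_mem _ hz)) s t
  obtain ⟨J, hJ, hmax⟩ := Finset.exists_max_image
    (I.powerset.filter fun J => J.Nonempty ∧ good J)
    Finset.card ⟨{i₀}, by simp [hi₀, hbase]⟩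
  simp only [Finset.mem_filter, Finset.mem_powerset] at hJ hmax
  obtain ⟨hJI, hJn, hJg⟩ := hJ
  by_cases hEq : J = I
  · rwa [← hEq]
  exfalso
  obtain ⟨a, ha, b, hb, hbJ, p, hpa, hpb⟩ := hI.2 J hJI hJn hEq
  obtain ⟨s, t, -, hst⟩ := rep_of_mem_comp T a p hpa
  obtain ⟨s', t', hne, hst'⟩ := rep_of_mem_comp T b p hpb
  obtain ⟨r, hr⟩ := exists_compl_dir (s', t') hne
  obtain ⟨P, hP1, hP2⟩ := hJg
  have hnew : good (insert b J) := by
    refine ⟨P ∪ (Finset.range (d * T.deg b)).image (fun z => pt b (s', t') r (z + 1)), ?_, ?_⟩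
    · refine (Finset.card_union_le _ _).trans ?_
      have h1 : ((Finset.range (d * T.deg b)).image
          (fun z => pt b (s', t') r (z + 1))).card ≤ d * T.deg b := by
        refine Finset.card_image_le.trans ?_
        simp
      rw [Finset.sum_insert hbJ, mul_add]
      omega
    · intro F hF hP
      have hold := hP2 F hF (fun v hv => hP v (Finset.mem_union_left _ hv))
      intro i hi
      rcases Finset.mem_insert.1 hi with h | h
      · subst h
        refine vanish_of_points (T.emb i) (s', t') r hr hF ?_
        intro z hz
        rcases z with _ | z
        · have := hold a ha s t
          rw [← hst, hst'] at this
          simpa using this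
        · exact hP _ (Finset.mem_union_right _
            (Finset.mem_image_of_mem (fun z => pt i (s', t') r (z + 1))
              (by simp only [Finset.mem_range] at hz ⊢; omega)))
      · exact hold i h
  have := hmax (insert b J) ⟨Finset.insert_subset hb hJI, Finset.insert_nonempty _ _, hnew⟩
  rw [Finset.card_insert_of_notMem hbJ] at this
  omega

/-- A set of points on a connected proper subcurve does not span. -/
lemma not_spans_of_subset [IsAlgClosed k] [CharZero k] (T : RedRNC k n) (I : Finset (Fin T.s))
    (hI : ConnSet (compAdj T) I) (hdeg : ∑ i ∈ I, T.deg i < n) (S : Finset (ProjSpace k n))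
    (hS : ∀ p ∈ S, ∃ i ∈ I, p ∈ T.comp i) : ¬ Spans k n S := by
  intro hsp
  obtain ⟨P, hP1, hP2⟩ := exists_points T 1 I hI
  have hlt : Submodule.span k (P : Set (Fin (n+1) → k)) < ⊤ := by
    rw [lt_top_iff_ne_top]
    intro h
    have h1 := finrank_span_finset_le_card (R := k) P
    rw [Set.finrank, h, finrank_top] at h1
    simp at h1
    omega
  obtain ⟨φ, hφ0, hφ⟩ := Submodule.exists_le_ker_of_lt_top _ hlt
  let F : MvPolynomial (Fin (n+1)) k :=
    ∑ l, MvPolynomial.C (φ (Pi.single l 1)) * MvPolynomial.X l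
  have hF : F.IsHomogeneous 1 := by
    refine MvPolynomial.IsHomogeneous.sum _ _ _ fun l _ => ?_
    exact (MvPolynomial.isHomogeneous_X k l).C_mul _
  have hev : ∀ v, MvPolynomial.eval v F = φ v := by
    intro v
    conv_rhs => rw [LinearMap.pi_apply_eq_sum_univ φ v]
    simp only [F, map_sum, map_mul, MvPolynomial.eval_C, MvPolynomial.eval_X]
    refine Finset.sum_congr rfl fun j _ => ?_
    have : (fun j' => if j = j' then (1:k) else 0) = Pi.single j 1 := by
      ext j'
      simp [Pi.single_apply, eq_comm]
    simp [this, mul_comm]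
  have hvan := hP2 F hF (fun v hv => by
    rw [hev]
    exact hφ (Submodule.subset_span hv))
  apply hφ0
  have hle : Submodule.span k (Projectivization.rep '' (S : Set (ProjSpace k n))) ≤
      LinearMap.ker φ := by
    rw [Submodule.span_le]
    rintro _ ⟨p, hp, rfl⟩
    obtain ⟨i, hi, hpi⟩ := hS p hp
    obtain ⟨s, t, -, hst⟩ := rep_of_mem_comp T i p hpi
    have := hvan i hi s t
    rw [← hst, hev] at this
    exact this
  rw [hsp] at hle
  exact LinearMap.ker_eq_top.1 (top_le_iff.1 hle)

open Classical in
/-- The points of `S` on the subcurve indexed by `I`. -/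
noncomputable def part (T : RedRNC k n) (S : Finset (ProjSpace k n)) (I : Finset (Fin T.s)) :
    Finset (ProjSpace k n) := S.filter fun p => ∃ i ∈ I, p ∈ T.comp i

lemma part_bound [IsAlgClosed k] [CharZero k] (T : RedRNC k n) {d x : ℕ} (hd : 0 < d)
    (S : Finset (ProjSpace k n)) (hmem : S ∈ minTerracini k n d x)
    (I : Finset (Fin T.s)) (hI : ConnSet (compAdj T) I) (hdeg : ∑ i ∈ I, T.deg i < n) :
    2 * (part T S I).card ≤ d * (∑ i ∈ I, T.deg i) + 1 := by
  classical
  obtain ⟨P, hP1, hP2⟩ := exists_points T d I hI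
  refine le_trans ?_ hP1
  have hA : ∀ p ∈ part T S I, ∃ i ∈ I, p ∈ T.comp i := fun p hp => (Finset.mem_filter.1 hp).2
  have hss : part T S I ⊂ S := by
    refine lt_of_le_of_ne (Finset.filter_subset _ _) fun h => ?_
    refine not_spans_of_subset T I hI hdeg S ?_ hmem.1.2.1
    intro p hp
    refine hA p ?_
    rw [h]
    exact hp
  refine two_card_le n d hd _ (hmem.2 _ hss) P ?_
  intro a ha
  obtain ⟨i, hi, hai⟩ := hA a ha
  obtain ⟨s, t, hne, hst⟩ := rep_of_mem_comp T i a hai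
  obtain ⟨w, hw1, hw2⟩ := exists_tangent (T.deg_pos i) (T.emb i) (T.emb_inj i) s t hne
  refine ⟨w, ?_, ?_⟩
  · rw [hst]; exact hw1
  · intro F hF hv
    have := hP2 F hF hv i hi
    rw [hst]
    exact ⟨this s t, hw2 F this⟩

/-- The main inequality: splitting the curve into two connected parts. -/
lemma split_bound [IsAlgClosed k] [CharZero k] (T : RedRNC k n) {d : ℕ} (hd : 0 < d)
    (S : Finset (ProjSpace k n)) (hS : ↑S ⊆ T.curve)
    (hmem : S ∈ minTerracini k n d (1 + (n * d + 1) / 2))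
    (I : Finset (Fin T.s)) (hI : ConnSet (compAdj T) I) (hJ : ConnSet (compAdj T) Iᶜ) :
    (Even n ∧ Odd d) ∧ (∀ p ∈ part T S I, p ∉ part T S Iᶜ) ∧
    Odd (∑ i ∈ I, T.deg i) ∧ 2 * (part T S I).card = (∑ i ∈ I, T.deg i) * d + 1 := by
  classical
  have hsum : ∑ i ∈ I, T.deg i + ∑ i ∈ Iᶜ, T.deg i = n := by
    rw [Finset.sum_add_sum_compl, T.sum_deg]
  have hpos : ∀ K : Finset (Fin T.s), K.Nonempty → 0 < ∑ i ∈ K, T.deg i := fun K hK =>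
    Finset.sum_pos (fun i _ => T.deg_pos i) hK
  have p1 := hpos I hI.1
  have p2 := hpos Iᶜ hJ.1
  have b1 := part_bound T hd S hmem I hI (by omega)
  have b2 := part_bound T hd S hmem Iᶜ hJ (by omega)
  have hun : part T S I ∪ part T S Iᶜ = S := by
    ext p
    simp only [part, Finset.mem_union, Finset.mem_filter]
    constructor
    · rintro (h | h) <;> exact h.1
    · intro hp
      obtain ⟨i, hi⟩ := Set.mem_iUnion.1 (hS hp)
      by_cases hiI : i ∈ I
      · exact Or.inl ⟨hp, i, hiI, hi⟩
      · exact Or.inr ⟨hp, i, by simpa using hiI, hi⟩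
  have hcard := Finset.card_union_add_card_inter (part T S I) (part T S Iᶜ)
  rw [hun, hmem.1.1] at hcard
  set a := ∑ i ∈ I, T.deg i
  set b := ∑ i ∈ Iᶜ, T.deg i
  have hnd : n * d = d * a + d * b := by rw [← hsum]; ring
  have hx : n * d + 2 ≤ 2 * (1 + (n * d + 1) / 2) := by omega
  have hint : (part T S I ∩ part T S Iᶜ).card = 0 := by omega
  have e1 : 2 * (part T S I).card = d * a + 1 := by omega
  have e2 : 2 * (part T S Iᶜ).card = d * b + 1 := by omega
  have o1 : Odd (d * a) := by
    rw [← Nat.not_even_iff_odd, Nat.even_iff]; omega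
  have o2 : Odd (d * b) := by
    rw [← Nat.not_even_iff_odd, Nat.even_iff]; omega
  rw [Nat.odd_mul] at o1 o2
  refine ⟨⟨?_, o1.1⟩, ?_, o1.2, by rw [e1, mul_comm]⟩
  · rw [← hsum]; exact o1.2.add_odd o2.2
  · intro p hp hp'
    rw [Finset.card_eq_zero] at hint
    have := Finset.mem_inter.2 ⟨hp, hp'⟩
    rw [hint] at this
    simp at this

end Helpers3

/-- Proposition: for `n ≥ 2`, `d ≥ 5` and `x = 1 + ⌈nd/2⌉`, if a minimally Terracini set
`S ∈ T(n,d;x)'` lies on a reducible rational normal curve `T = T_1 ∪ ⋯ ∪ T_s` (`s ≥ 2`)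
then: (1) `S` avoids the singular points of `T`; (2) `n` is even and `d` is odd;
(3) every final component `T_i` has odd degree `n_i` and `2·#(S ∩ T_i) = n_i·d + 1`. -/
theorem redRNC_minTerracini_structure
    (k : Type*) [Field k] [IsAlgClosed k] [CharZero k]
    (n d : ℕ) (hn : 2 ≤ n) (hd : 5 ≤ d)
    (T : RedRNC k n) (hT : T.IsGood)
    (S : Finset (ProjSpace k n)) (hS : ↑S ⊆ T.curve)
    (hmem : S ∈ minTerracini k n d (1 + (n * d + 1) / 2)) :
    (↑S ⊆ T.reg) ∧
    (Even n ∧ Odd d) ∧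
    (∀ i, T.Final i →
      Odd (T.deg i) ∧ 2 * ((↑S ∩ T.comp i).ncard) = T.deg i * d + 1) := by
  classical
  have hd0 : 0 < d := by omega
  have hU := connSet_univ T hT
  have hsym := compAdj_symm T
  refine ⟨?_, ?_, ?_⟩
  · intro p hp
    refine ⟨hS hp, ?_⟩
    rintro ⟨i, j, hij, hpi, hpj⟩
    obtain ⟨J, hj, hi, hC, hC'⟩ := exists_conn_split hsym hU hij
    have h := (split_bound T hd0 S hS hmem J hC hC').2.1 p
      (Finset.mem_filter.2 ⟨hp, j, hj, hpj⟩)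
    exact h (Finset.mem_filter.2 ⟨hp, i, by simpa using hi, hpi⟩)
  · have h2 := T.two_le_s
    have hij : (⟨0, by omega⟩ : Fin T.s) ≠ ⟨1, by omega⟩ := by simp
    obtain ⟨J, hj, hi, hC, hC'⟩ := exists_conn_split hsym hU hij
    exact (split_bound T hd0 S hS hmem J hC hC').1
  · intro i hi
    have h := (split_bound T hd0 S hS hmem {i} (connSet_singleton _ i)
      (connSet_final T hT i hi)).2.2
    rw [Finset.sum_singleton] at h
    refine ⟨h.1, ?_⟩
    rw [← h.2, ← Set.ncard_coe_finset]
    congr 2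
    ext p
    simp [part]
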